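/- Let k be a field of characteristic 2 and let Q_8 be the quaternion group of order 8. The dimensions of the group cohomology of Q_8 with trivial coefficients k are 4-periodic: for all s ≥ 0, dim_k H^s(Q_8; k) = 1 if s ≡ 0 or 3 (mod 4), and dim_k H^s(Q_8; k) = 2 if s ≡ 1 or 2 (mod 4). (This reflects the ring isomorphism H^*(Q_8; k) ≅ k[x₁, x₂, e₄]/(x₁² + x₁x₂ + x₂², x₁²x₂ + x₁x₂²) with |x₁| = |x₂| = 1 and |e₄| = 4.) -/

import Mathlib

/-!
For `n ≠ 0` the group ring of the quaternion group of order `4 * n` carries the 4-periodic free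
resolution of Cartan and Eilenberg, with terms of ranks `1, 2, 2, 1`. Its exactness rests on two
facts about `⟨θ⟩`: modulo the left ideal generated by `θ - 1` every element is a combination of `1`
and `τ`, and an element annihilated by `θ - 1` on the right is such a combination times the sum of
the powers of `θ`. In characteristic `2` with `n` even every entry of the differentials has
augmentation zero, so the complex computing cohomology with trivial coefficients has zero
differentials and the ranks are the dimensions.
-/

open CategoryTheory MonoidAlgebra QuaternionGroup
open scoped Matrix

universe u v w

section Semiring

variable {R : Type*} [Semiring R] {x y : R}

theorem pow_mul_mul_pow_of_mul_mul_eq (h : x * y * x = y) (m : ℕ) : x ^ m * y * x ^ m = y := by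
  induction m with
  | zero => simp
  | succ m ih =>
    calc x ^ (m + 1) * y * x ^ (m + 1) = x ^ m * (x * y * x) * x ^ m := by
          nth_rw 2 [pow_succ']
          simp only [pow_succ, mul_assoc]
      _ = y := by rw [h, ih]

theorem geom_sum_mul_mul_pow_of_mul_mul_eq (h : x * y * x = y) (m : ℕ) :
    (∑ i ∈ Finset.range m, x ^ i) * y * x ^ m = y * (∑ i ∈ Finset.range m, x ^ i) * x := by
  induction m with
  | zero => simp
  | succ m ih =>
    calc (∑ i ∈ Finset.range (m + 1), x ^ i) * y * x ^ (m + 1)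
        = ((∑ i ∈ Finset.range m, x ^ i) * y * x ^ m + x ^ m * y * x ^ m) * x := by
          rw [Finset.sum_range_succ, pow_succ]
          simp only [add_mul, mul_assoc]
      _ = y * ((∑ i ∈ Finset.range m, x ^ i) * x + 1) * x := by
          rw [ih, pow_mul_mul_pow_of_mul_mul_eq h]
          simp only [mul_add, add_mul, mul_one, mul_assoc]
      _ = y * (∑ i ∈ Finset.range (m + 1), x ^ i) * x := by
          rw [Finset.sum_range_succ', Finset.sum_mul]
          simp only [pow_succ, pow_zero]

theorem exact_vecMul {ι κ μ : Type*} [Fintype ι] [Fintype κ] {M : Matrix ι κ R}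
    {M' : Matrix κ μ R} (hMM' : M * M' = 0) (hM' : ∀ v, v ᵥ* M' = 0 → ∃ u, u ᵥ* M = v) :
    Function.Exact (· ᵥ* M) (· ᵥ* M') := fun v ↦
  ⟨hM' v, by
    rintro ⟨u, rfl⟩
    exact (Matrix.vecMul_vecMul ..).trans (hMM' ▸ Matrix.vecMul_zero u)⟩

end Semiring

section Resolution

variable {k : Type u} {G : Type v} [CommRing k] [Monoid G]

theorem rep_exact_of_function_exact {S : ShortComplex (Rep.{w} k G)}
    (h : Function.Exact S.f.hom S.g.hom) : S.Exact := by
  apply (forget₂ _ (ModuleCat k)).reflects_exact_of_faithful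
  rw [ShortComplex.moduleCat_exact_iff]
  exact fun x hx ↦ (h x).1 hx

theorem rep_comp_eq_zero_of_function_exact {A B C : Rep.{w} k G} {f : A ⟶ B} {g : B ⟶ C}
    (h : Function.Exact f.hom g.hom) : f ≫ g = 0 := by
  apply Rep.hom_ext
  ext x
  exact h.apply_apply_eq_zero x

variable {X : ℕ → Rep.{w} k G} {A : Rep.{w} k G} [∀ m, Projective (X m)]
  (d : ∀ m, X (m + 1) ⟶ X m) (π : X 0 ⟶ A)
  (hd : ∀ m, Function.Exact (d (m + 1)).hom (d m).hom)
  (hdπ : Function.Exact (d 0).hom π.hom) (hπ : Function.Surjective π.hom)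

/-- The projective resolution assembled from differentials `d` and an augmentation `π` that are
exact as maps of the underlying sets, which is the form in which exactness gets checked by hand. -/
noncomputable def resolutionOfExact : ProjectiveResolution A where
  complex := ChainComplex.of X d fun m ↦ rep_comp_eq_zero_of_function_exact (hd m)
  projective m := inferInstanceAs (Projective (X m))
  π := (ChainComplex.toSingle₀Equiv _ A).symm
    ⟨π, by simpa only [ChainComplex.of_d] using! rep_comp_eq_zero_of_function_exact hdπ⟩
  quasiIso.quasiIsoAt m := by
    cases m with
    | zero =>
      rw [ChainComplex.quasiIsoAt₀_iff, ShortComplex.quasiIso_iff_of_zeros' _ rfl rfl rfl]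
      refine ⟨rep_exact_of_function_exact ?_, (Rep.epi_iff_surjective _).2 hπ⟩
      simpa only [← ChainComplex.of_d] using! hdπ
    | succ m =>
      rw [quasiIsoAt_iff_exactAt' (hL := ChainComplex.exactAt_succ_single_obj ..),
        HomologicalComplex.exactAt_iff' _ (m + 2) (m + 1) m (by simp) (by simp)]
      refine rep_exact_of_function_exact ?_
      simpa only [← ChainComplex.of_d] using! hd m

theorem resolutionOfExact_complex_d (m : ℕ) :
    (resolutionOfExact d π hd hdπ hπ).complex.d (m + 1) m = d m :=
  ChainComplex.of_d ..

end Resolution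

/-- If every differential of the resolution `P` of the trivial representation dies in `A`, then
the cohomology with coefficients in `A` is just the space of morphisms from `P` to `A`. -/
noncomputable def groupCohomologyEquivHom {k G : Type u} [CommRing k] [Group G] {A : Rep k G}
    (P : ProjectiveResolution (Rep.trivial k G k))
    (hP : ∀ i (f : P.complex.X i ⟶ A), P.complex.d (i + 1) i ≫ f = 0) (m : ℕ) :
    groupCohomology A m ≃ₗ[k] (P.complex.X m ⟶ A) :=
  let K := P.complex.linearYonedaObj k A
  have hK (i j : ℕ) : K.d i j = 0 := by
    by_cases hij : i + 1 = j
    · subst hij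
      ext f
      exact hP i f
    · exact K.shape _ _ hij
  (groupCohomologyIso A m P ≪≫ (K.isoHomologyπ _ m rfl (hK _ _)).symm ≪≫
    K.iCyclesIso m (m + 1) (by simp) (hK _ _)).toLinearEquiv

/-- The augmentation of a monoid algebra, sending every element of the monoid to `1`. -/
noncomputable def augmentation {k G : Type*} [CommSemiring k] [Monoid G] : k[G] →ₐ[k] k :=
  MonoidAlgebra.lift k k G 1

section FreeRep

variable {k G ι κ μ : Type u} [CommRing k] [Monoid G]

/-- The morphism of free representations given by a matrix over the monoid algebra. Free
representations are left modules, so the matrix multiplies row vectors from the right. -/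
noncomputable def freeMap [Finite κ] (M : Matrix ι κ k[G]) : Rep.free k G ι ⟶ Rep.free k G κ :=
  Rep.freeLift k G (Rep.free k G κ) fun i ↦ Finsupp.equivFunOnFinite.symm (M i)

theorem representation_free_apply_apply (g : G) (x : κ →₀ k[G]) (j : κ) :
    Representation.free k G κ g x j = single g 1 * x j := by
  classical
  induction x using Finsupp.induction_linear with
  | zero => simp
  | add x y hx hy => simp_all [mul_add]
  | single i a =>
    induction a using MonoidAlgebra.induction_linear with
    | zero => simp
    | add a b ha hb => simp_all [mul_add]
    | single h r =>
      simp only [Representation.finsupp_single, Finsupp.single_apply]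
      split_ifs <;> simp

theorem freeMap_apply [Fintype ι] [Finite κ] (M : Matrix ι κ k[G]) (x : ι →₀ k[G]) :
    ⇑((freeMap M).hom x) = ⇑x ᵥ* M := by
  classical
  ext j : 1
  induction x using Finsupp.induction_linear with
  | zero => simp
  | add x y hx hy => simp_all [Matrix.add_vecMul]
  | single i a =>
    induction a using MonoidAlgebra.induction_linear with
    | zero => simp
    | add a b ha hb => simp_all [Matrix.add_vecMul]
    | single g r =>
      have hM := representation_free_apply_apply (k := k) g (Finsupp.equivFunOnFinite.symm (M i)) j
      simp [freeMap, Finsupp.single_eq_pi_single, Matrix.single_vecMul, hM, ← smul_mul_assoc]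

theorem exact_freeMap [Fintype ι] [Fintype κ] [Finite μ] {M : Matrix ι κ k[G]}
    {M' : Matrix κ μ k[G]} (h : Function.Exact (· ᵥ* M) (· ᵥ* M')) :
    Function.Exact (freeMap M).hom (freeMap M').hom := by
  intro y
  rw [← DFunLike.coe_injective.eq_iff, freeMap_apply]
  refine (h y).trans ⟨fun ⟨x, hx⟩ ↦ ⟨Finsupp.equivFunOnFinite.symm x, ?_⟩, fun ⟨x, hx⟩ ↦ ⟨x, ?_⟩⟩
  · exact DFunLike.coe_injective ((freeMap_apply _ _).trans hx)
  · exact (freeMap_apply _ _).symm.trans (congrArg _ hx)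

variable {V : Type u} [AddCommGroup V] [Module k V]

theorem freeLift_trivial_apply [Fintype ι] (f : ι → V) (x : ι →₀ k[G]) :
    (Rep.freeLift k G (Rep.trivial k G V) f).hom x = ∑ i, augmentation (x i) • f i := by
  classical
  induction x using Finsupp.induction_linear with
  | zero => simp
  | add x y hx hy => simp_all [add_smul, Finset.sum_add_distrib]
  | single i a =>
    rw [Finset.sum_eq_single i (by simp +contextual [eq_comm]) (by simp)]
    induction a using MonoidAlgebra.induction_linear with
    | zero => simp
    | add a b ha hb => simp_all [add_smul]
    | single g r => simp [augmentation, MonoidAlgebra.lift_single]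

theorem freeMap_comp_eq_zero_of_augmentation_eq_zero [Finite κ] {M : Matrix ι κ k[G]}
    (hM : ∀ i j, augmentation (M i j) = 0) (f : Rep.free k G κ ⟶ Rep.trivial k G V) :
    freeMap M ≫ f = 0 := by
  cases nonempty_fintype κ
  obtain ⟨f, rfl⟩ : ∃ f', f = Rep.freeLift k G _ f' :=
    ⟨_, ((Rep.freeLiftLEquiv k G κ _).symm_apply_apply f).symm⟩
  apply Rep.free_ext
  intro i
  have hf := freeLift_trivial_apply f (Finsupp.equivFunOnFinite.symm (M i))
  simp_all [freeMap]

variable (k G ι) in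
/-- The augmentation as a morphism from a free representation of rank one onto the trivial
representation. -/
noncomputable def augmentationHom : Rep.free k G ι ⟶ Rep.trivial k G k :=
  Rep.freeLift k G _ fun _ ↦ 1

theorem augmentationHom_apply [Unique ι] (x : ι →₀ k[G]) :
    (augmentationHom k G ι).hom x = augmentation (x default) := by
  rw [augmentationHom, freeLift_trivial_apply, Fintype.sum_unique, smul_eq_mul, mul_one]

theorem augmentationHom_surjective [Unique ι] :
    Function.Surjective (augmentationHom k G ι).hom := fun r ↦ by
  refine ⟨Finsupp.single default (algebraMap k _ r), ?_⟩
  rw [augmentationHom_apply, Finsupp.single_eq_same, AlgHom.commutes]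
  rfl

theorem exact_freeMap_augmentationHom [Fintype ι] [Unique κ] {M : Matrix ι κ k[G]}
    (hM : ∀ i j, augmentation (M i j) = 0)
    (hM' : ∀ v : κ → k[G], augmentation (v default) = 0 → ∃ u, u ᵥ* M = v) :
    Function.Exact (freeMap M).hom (augmentationHom k G κ).hom := by
  intro y
  constructor
  · intro hy
    rw [augmentationHom_apply] at hy
    obtain ⟨u, hu⟩ := hM' y hy
    exact ⟨Finsupp.equivFunOnFinite.symm u, DFunLike.coe_injective ((freeMap_apply _ _).trans hu)⟩
  · rintro ⟨x, rfl⟩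
    exact DFunLike.congr_fun (congrArg Rep.Hom.hom
      (freeMap_comp_eq_zero_of_augmentation_eq_zero hM (augmentationHom k G κ))) x

end FreeRep

/-- The group ring of the quaternion group of order `4 * n`. -/
abbrev QuaternionGroupRing (k : Type*) [CommRing k] (n : ℕ) := k[QuaternionGroup n]

namespace QuaternionGroupRing

variable (k : Type*) [CommRing k] (n : ℕ)

/-- The generator `θ` of the quaternion group, which generates its cyclic subgroup of index two. -/
noncomputable def theta : QuaternionGroupRing k n := of k _ (a 1)

/-- The generator `τ` of the quaternion group, satisfying `τ ^ 2 = θ ^ n`. -/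
noncomputable def tau : QuaternionGroupRing k n := of k _ (xa 0)

/-- The sum of the powers of `θ` up to the central element `θ ^ n`, which is excluded. -/
noncomputable def halfRotationSum : QuaternionGroupRing k n :=
  ∑ i ∈ Finset.range n, theta k n ^ i

/-- The norm element of the cyclic subgroup generated by `θ`. -/
noncomputable def rotationSum : QuaternionGroupRing k n :=
  ∑ i ∈ Finset.range (2 * n), theta k n ^ i

local notation "θ" => theta k n
local notation "τ" => tau k n
local notation "S" => halfRotationSum k n
local notation "N" => rotationSum k n
local notation "C" => algebraMap k (QuaternionGroupRing k n)

/-- The ranks `1, 2, 2, 1, 1, 2, 2, 1, …` of the terms of the periodic resolution. -/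
def rank : ℕ → ℕ
  | 0 => 1
  | 1 => 2
  | 2 => 2
  | 3 => 1
  | m + 4 => rank m

theorem rank_eq : ∀ m, rank m = if m % 4 = 0 ∨ m % 4 = 3 then 1 else 2
  | 0 | 1 | 2 | 3 => rfl
  | m + 4 => by
    rw [Nat.add_mod_right]
    exact rank_eq m

/-- The matrices of the differentials of the periodic resolution of Cartan and Eilenberg, acting
on row vectors from the right. -/
noncomputable def boundary :
    ∀ m, Matrix (Fin (rank (m + 1))) (Fin (rank m)) (QuaternionGroupRing k n)
  | 0 => !![θ - 1; τ - 1]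
  | 1 => !![S, -(τ + 1); θ * τ + 1, θ - 1]
  | 2 => !![θ - 1, 1 - θ * τ]
  | 3 => !![(1 + τ) * N]
  | m + 4 => boundary m

theorem theta_pow (i : ℕ) : θ ^ i = of k _ (a i) := by
  rw [theta, ← map_pow, a_one_pow]

theorem theta_pow_two_mul : θ ^ (2 * n) = 1 := by
  rw [theta_pow, CharP.cast_eq_zero, ← QuaternionGroup.one_def, map_one]

theorem theta_mul_tau_mul_theta : θ * τ * θ = τ := by
  simp [theta, tau]

theorem tau_mul_tau : τ * τ = θ ^ n := by
  simp [theta_pow, tau]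

theorem tau_mul_tau_mul_self : τ * τ * (τ * τ) = 1 := by
  rw [tau_mul_tau, ← pow_add, ← two_mul, theta_pow_two_mul]

theorem of_xa (i : ZMod (2 * n)) : of k _ (xa i) = τ * of k _ (a i) := by
  rw [tau, ← map_mul, xa_mul_a, zero_add]

theorem halfRotationSum_mul_theta_sub_one : S * (θ - 1) = τ * τ - 1 := by
  rw [tau_mul_tau, halfRotationSum, geom_sum_mul]

theorem theta_sub_one_mul_halfRotationSum : (θ - 1) * S = τ * τ - 1 := by
  rw [tau_mul_tau, halfRotationSum, mul_geom_sum]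

theorem commute_theta_halfRotationSum : Commute θ S :=
  Commute.sum_right _ _ _ fun _ _ ↦ (Commute.refl θ).pow_right _

theorem rotationSum_mul_theta_sub_one : N * (θ - 1) = 0 := by
  rw [rotationSum, geom_sum_mul, theta_pow_two_mul, sub_self]

theorem theta_sub_one_mul_rotationSum : (θ - 1) * N = 0 := by
  rw [rotationSum, mul_geom_sum, theta_pow_two_mul, sub_self]

theorem rotationSum_mul_tau : N * τ = τ * N := by
  have h := geom_sum_mul_mul_pow_of_mul_mul_eq (theta_mul_tau_mul_theta k n) (2 * n)
  rw [theta_pow_two_mul, mul_one, ← rotationSum] at h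
  linear_combination (norm := noncomm_ring) h + τ * rotationSum_mul_theta_sub_one k n

theorem tau_mul_tau_mul_rotationSum : τ * τ * N = N := by
  linear_combination (norm := noncomm_ring)
    S * theta_sub_one_mul_rotationSum k n - halfRotationSum_mul_theta_sub_one k n * N

theorem theta_mul_tau_mul_rotationSum : θ * τ * N = τ * N := by
  linear_combination (norm := noncomm_ring)
    theta_sub_one_mul_rotationSum k n * τ - (θ - 1) * rotationSum_mul_tau k n

theorem rotationSum_eq : N = S + τ * τ * S := by
  rw [tau_mul_tau, rotationSum, two_mul, Finset.sum_range_add, halfRotationSum, Finset.mul_sum]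
  simp only [pow_add]

theorem halfRotationSum_mul_theta_mul_tau : S * θ * τ = τ * (τ * τ * S) := by
  have hreflect : S * (θ * τ) * (τ * τ) = θ * τ * S * θ := by
    rw [tau_mul_tau, halfRotationSum]
    refine geom_sum_mul_mul_pow_of_mul_mul_eq ?_ n
    rw [mul_assoc, theta_mul_tau_mul_theta]
  have hθS : θ * S = S * θ := commute_theta_halfRotationSum k n
  have hττS : τ * τ * S = S * (τ * τ) := by
    rw [tau_mul_tau]
    exact (commute_theta_halfRotationSum k n).pow_left n
  calc S * θ * τ = S * (θ * τ) * (τ * τ) * (τ * τ) := by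
        rw [mul_assoc _ (τ * τ), tau_mul_tau_mul_self, mul_one, mul_assoc]
    _ = θ * τ * (S * θ) * (τ * τ) := by rw [hreflect, mul_assoc _ S]
    _ = θ * τ * θ * (S * (τ * τ)) := by
        rw [← hθS]
        simp only [mul_assoc]
    _ = τ * (τ * τ * S) := by rw [theta_mul_tau_mul_theta, hττS]

theorem tau_mul_halfRotationSum_add : τ * S + S * θ * τ = τ * N := by
  rw [halfRotationSum_mul_theta_mul_tau, rotationSum_eq, mul_add]

theorem augmentation_theta : augmentation θ = (1 : k) := by
  simp [augmentation, theta]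

theorem augmentation_tau : augmentation τ = (1 : k) := by
  simp [augmentation, tau]

theorem augmentation_halfRotationSum : augmentation S = (n : k) := by
  simp [halfRotationSum, augmentation_theta]

theorem augmentation_rotationSum : augmentation N = (2 * n : k) := by
  simp [rotationSum, augmentation_theta]

variable {k n}

theorem coeff_rotationSum_xa (i : ZMod (2 * n)) : (N).coeff (xa i) = 0 := by
  simp [rotationSum, theta_pow]

theorem coeff_algebraMap_add_mul_rotationSum (p q : k) (g : QuaternionGroup n) :
    ((C p + C q * τ) * N).coeff g = p * (N).coeff g + q * (N).coeff (xa n * g) := by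
  have hinv : (xa 0 : QuaternionGroup n)⁻¹ = xa n := by
    refine inv_eq_of_mul_eq_one_right ?_
    rw [xa_mul_xa, sub_zero, ← Nat.cast_add, ← two_mul, CharP.cast_eq_zero, a_zero]
  simp [add_mul, tau, hinv]

theorem augmentation_mul_theta_sub_one_add (w : QuaternionGroupRing k n) (p q : k) :
    augmentation (w * (θ - 1) + (C p + C q * τ)) = p + q := by
  simp only [map_add, map_mul, map_sub, map_one, AlgHom.commutes, Algebra.algebraMap_self,
    RingHom.id_apply, augmentation_theta, augmentation_tau, sub_self, mul_zero, zero_add, mul_one]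

theorem augmentation_boundary_zero : ∀ i j, augmentation (boundary k n 0 i j) = 0 := by
  change ∀ (i : Fin 2) (j : Fin 1), augmentation (!![θ - 1; τ - 1] i j) = 0
  simp [Fin.forall_fin_two, augmentation_theta, augmentation_tau]

theorem augmentation_boundary [CharP k 2] (hn : Even n) :
    ∀ m i j, augmentation (boundary k n m i j) = 0
  | 0 => augmentation_boundary_zero
  | 1 => by
    have hn' : (n : k) = 0 := (CharP.cast_eq_zero_iff k 2 n).2 hn.two_dvd
    change ∀ i j : Fin 2, augmentation (!![S, -(τ + 1); θ * τ + 1, θ - 1] i j) = 0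
    simp [Fin.forall_fin_two, augmentation_theta, augmentation_tau, augmentation_halfRotationSum,
      hn', CharTwo.add_self_eq_zero]
  | 2 => by
    change ∀ (i : Fin 1) (j : Fin 2), augmentation (!![θ - 1, 1 - θ * τ] i j) = 0
    simp [Fin.forall_fin_two, augmentation_theta, augmentation_tau]
  | 3 => by
    change ∀ i j : Fin 1, augmentation (!![(1 + τ) * N] i j) = 0
    simp [augmentation_tau, augmentation_rotationSum, CharTwo.two_eq_zero]
  | m + 4 => augmentation_boundary hn m

theorem boundary_one_mul_boundary_zero : boundary k n 1 * boundary k n 0 = 0 := by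
  have hS : S * (θ - 1) + -(τ + 1) * (τ - 1) = 0 := by
    linear_combination (norm := noncomm_ring) halfRotationSum_mul_theta_sub_one k n
  have hθτ : (θ * τ + 1) * (θ - 1) + (θ - 1) * (τ - 1) = 0 := by
    linear_combination (norm := noncomm_ring) theta_mul_tau_mul_theta k n
  change !![S, -(τ + 1); θ * τ + 1, θ - 1] * !![θ - 1; τ - 1] = 0
  simpa [← Matrix.ext_iff, Fin.forall_fin_two] using And.intro hS hθτ

theorem boundary_two_mul_boundary_one : boundary k n 2 * boundary k n 1 = 0 := by
  have hS : (θ - 1) * S + (1 - θ * τ) * (θ * τ + 1) = 0 := by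
    linear_combination (norm := noncomm_ring)
      theta_sub_one_mul_halfRotationSum k n - theta_mul_tau_mul_theta k n * τ
  have hθτ : (θ - 1) * -(τ + 1) + (1 - θ * τ) * (θ - 1) = 0 := by
    linear_combination (norm := noncomm_ring) -theta_mul_tau_mul_theta k n
  change !![θ - 1, 1 - θ * τ] * !![S, -(τ + 1); θ * τ + 1, θ - 1] = 0
  simpa [← Matrix.ext_iff, Fin.forall_fin_two] using And.intro hS hθτ

theorem boundary_three_mul_boundary_two : boundary k n 3 * boundary k n 2 = 0 := by
  have hNθ := rotationSum_mul_theta_sub_one k n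
  have hN₁ : (1 + τ) * N * (θ - 1) = 0 := by
    rw [mul_assoc, hNθ, mul_zero]
  have hN₂ : (1 + τ) * N * (1 - θ * τ) = 0 := by
    linear_combination (norm := noncomm_ring) -(1 + τ) * hNθ * τ
      - (1 + τ) * rotationSum_mul_tau k n - tau_mul_tau_mul_rotationSum k n
  change !![(1 + τ) * N] * !![θ - 1, 1 - θ * τ] = 0
  simpa [← Matrix.ext_iff, Fin.forall_fin_two] using And.intro hN₁ hN₂

theorem boundary_four_mul_boundary_three : boundary k n 4 * boundary k n 3 = 0 := by
  have hN₁ : (θ - 1) * ((1 + τ) * N) = 0 := by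
    linear_combination (norm := noncomm_ring)
      theta_sub_one_mul_rotationSum k n + theta_mul_tau_mul_rotationSum k n
  have hN₂ : (τ - 1) * ((1 + τ) * N) = 0 := by
    linear_combination (norm := noncomm_ring) tau_mul_tau_mul_rotationSum k n
  change !![θ - 1; τ - 1] * !![(1 + τ) * N] = 0
  simpa [← Matrix.ext_iff, Fin.forall_fin_two] using And.intro hN₁ hN₂

theorem boundary_succ_mul_boundary : ∀ m, boundary k n (m + 1) * boundary k n m = 0
  | 0 => boundary_one_mul_boundary_zero
  | 1 => boundary_two_mul_boundary_one
  | 2 => boundary_three_mul_boundary_two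
  | 3 => boundary_four_mul_boundary_three
  | m + 4 => boundary_succ_mul_boundary m

variable [NeZero n]

theorem of_a (i : ZMod (2 * n)) : of k _ (a i) = θ ^ i.val := by
  rw [theta_pow, ZMod.natCast_zmod_val]

theorem exists_eq_mul_theta_sub_one_add (α : QuaternionGroupRing k n) :
    ∃ w, ∃ p q : k, α = w * (θ - 1) + (C p + C q * τ) := by
  have hθ (m : ℕ) : θ ^ m = (∑ i ∈ Finset.range m, θ ^ i) * (θ - 1) + 1 := by
    rw [geom_sum_mul, sub_add_cancel]
  induction α using MonoidAlgebra.induction_linear with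
  | zero => exact ⟨0, 0, 0, by simp⟩
  | add α β hα hβ =>
    obtain ⟨w, p, q, rfl⟩ := hα
    obtain ⟨w', p', q', rfl⟩ := hβ
    exact ⟨w + w', p + p', q + q', by rw [map_add, map_add]; noncomm_ring⟩
  | single g r =>
    rw [show single g r = C r * of k _ g by simp]
    cases g with
    | a i =>
      refine ⟨C r * ∑ j ∈ Finset.range i.val, θ ^ j, r, 0, ?_⟩
      rw [of_a, hθ, map_zero]
      noncomm_ring
    | xa i =>
      refine ⟨C r * τ * ∑ j ∈ Finset.range i.val, θ ^ j, 0, r, ?_⟩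
      rw [of_xa, of_a, hθ, map_zero]
      noncomm_ring

theorem coeff_mul_a_of_mul_theta_sub_one_eq_zero {α : QuaternionGroupRing k n}
    (hα : α * (θ - 1) = 0) (g : QuaternionGroup n) (i : ZMod (2 * n)) :
    α.coeff (g * a i) = α.coeff g := by
  have hpow (m : ℕ) : α * θ ^ m = α := by
    induction m with
    | zero => rw [pow_zero, mul_one]
    | succ m ih => linear_combination (norm := noncomm_ring) ih * θ + hα
  have hαi : α * single (a i) 1 = α := by rw [← of_apply, of_a, hpow]
  conv_lhs => rw [← hαi]
  rw [coeff_mul_single_mul, mul_one]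

theorem eq_of_mul_theta_sub_one_eq_zero {α β : QuaternionGroupRing k n}
    (hα : α * (θ - 1) = 0) (hβ : β * (θ - 1) = 0) (h_one : α.coeff 1 = β.coeff 1)
    (h_xa : α.coeff (xa 0) = β.coeff (xa 0)) : α = β := by
  ext g
  cases g with
  | a i =>
    rw [← one_mul (a i), coeff_mul_a_of_mul_theta_sub_one_eq_zero hα,
      coeff_mul_a_of_mul_theta_sub_one_eq_zero hβ, h_one]
  | xa i =>
    rw [← zero_add i, ← xa_mul_a, coeff_mul_a_of_mul_theta_sub_one_eq_zero hα,
      coeff_mul_a_of_mul_theta_sub_one_eq_zero hβ, h_xa]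

theorem coeff_rotationSum_one : (N).coeff 1 = 1 := by
  simp_rw [rotationSum, theta_pow, coeff_sum, Finsupp.finsetSum_apply, of_apply]
  rw [Finset.sum_eq_single_of_mem 0 (by simp [NeZero.pos n])]
  · simp
  · intro i hi hi0
    have hi' : (i : ZMod (2 * n)) ≠ 0 := by
      rw [Ne, ZMod.natCast_eq_zero_iff]
      exact Nat.not_dvd_of_pos_of_lt (Nat.pos_of_ne_zero hi0) (Finset.mem_range.1 hi)
    simp [QuaternionGroup.one_def, hi', -a_zero]

theorem coeff_one_algebraMap_add_mul_rotationSum (p q : k) :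
    ((C p + C q * τ) * N).coeff 1 = p := by
  rw [coeff_algebraMap_add_mul_rotationSum, coeff_rotationSum_one, mul_one, mul_one,
    coeff_rotationSum_xa, mul_zero, add_zero]

theorem coeff_xa_zero_algebraMap_add_mul_rotationSum (p q : k) :
    ((C p + C q * τ) * N).coeff (xa 0) = q := by
  rw [coeff_algebraMap_add_mul_rotationSum, coeff_rotationSum_xa, xa_mul_xa, add_sub_assoc]
  simp [coeff_rotationSum_one]

theorem eq_zero_of_algebraMap_add_mul_rotationSum_eq_zero {p q : k}
    (h : (C p + C q * τ) * N = 0) : p = 0 ∧ q = 0 := by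
  constructor
  · rw [← coeff_one_algebraMap_add_mul_rotationSum (n := n) p q, h]
    rfl
  · rw [← coeff_xa_zero_algebraMap_add_mul_rotationSum (n := n) p q, h]
    rfl

theorem exists_eq_algebraMap_add_mul_rotationSum {α : QuaternionGroupRing k n}
    (hα : α * (θ - 1) = 0) : ∃ r s : k, α = (C r + C s * τ) * N := by
  refine ⟨α.coeff 1, α.coeff (xa 0), eq_of_mul_theta_sub_one_eq_zero hα ?_ ?_ ?_⟩
  · rw [mul_assoc, rotationSum_mul_theta_sub_one, mul_zero]
  · rw [coeff_one_algebraMap_add_mul_rotationSum]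
  · rw [coeff_xa_zero_algebraMap_add_mul_rotationSum]

theorem exists_of_augmentation_eq_zero {α : QuaternionGroupRing k n} (hα : augmentation α = 0) :
    ∃ u v, u * (θ - 1) + v * (τ - 1) = α := by
  obtain ⟨w, p, q, rfl⟩ := exists_eq_mul_theta_sub_one_add α
  obtain rfl : q = -p := by
    rw [augmentation_mul_theta_sub_one_add] at hα
    linear_combination hα
  refine ⟨w, -C p, ?_⟩
  rw [map_neg]
  noncomm_ring

theorem augmentation_eq_zero_of_mul_rotationSum_eq_zero {α : QuaternionGroupRing k n}
    (hα : α * ((1 + τ) * N) = 0) : augmentation α = 0 := by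
  obtain ⟨w, p, q, rfl⟩ := exists_eq_mul_theta_sub_one_add α
  have hpq : (C (p + q) + C (p + q) * τ) * N = 0 := by
    simp only [map_add]
    linear_combination (norm := noncomm_ring) hα - w * theta_sub_one_mul_rotationSum k n
      - w * theta_mul_tau_mul_rotationSum k n - C q * tau_mul_tau_mul_rotationSum k n
  rw [augmentation_mul_theta_sub_one_add]
  exact (eq_zero_of_algebraMap_add_mul_rotationSum_eq_zero hpq).1

theorem exists_of_boundary_zero_eq_zero {α β : QuaternionGroupRing k n}
    (h : α * (θ - 1) + β * (τ - 1) = 0) :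
    ∃ u v, u * S + v * (θ * τ + 1) = α ∧ u * -(τ + 1) + v * (θ - 1) = β := by
  have hS := halfRotationSum_mul_theta_sub_one k n
  have hττN := tau_mul_tau_mul_rotationSum k n
  have hθN := theta_sub_one_mul_rotationSum k n
  have hθτ := theta_mul_tau_mul_theta k n
  obtain ⟨w, p, q, rfl⟩ := exists_eq_mul_theta_sub_one_add β
  obtain rfl : p = q := by
    have hpq : (C (q - p) + C (p - q) * τ) * N = 0 := by
      simp only [map_sub]
      linear_combination (norm := noncomm_ring) h * N - α * hθN + w * hθN - C q * hττN
        - w * hθτ * N + w * θ * τ * hθN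
    exact sub_eq_zero.1 (eq_zero_of_algebraMap_add_mul_rotationSum_eq_zero hpq).2
  -- Subtracting the images of `-C p` and `w` under the next differential reduces `β` to zero.
  have hα : (α + C p * S - w * (θ * τ + 1)) * (θ - 1) = 0 := by
    linear_combination (norm := noncomm_ring) h + C p * hS - w * hθτ
  obtain ⟨r, s, hrs⟩ := exists_eq_algebraMap_add_mul_rotationSum hα
  refine ⟨-C p - (C s + C r * τ) * (1 - τ), w + (C s + C r * τ) * S, ?_, ?_⟩
  · linear_combination (norm := noncomm_ring) -hrs
      + (C s + C r * τ) * tau_mul_halfRotationSum_add k n + C r * hττN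
  · linear_combination (norm := noncomm_ring) (C s + C r * τ) * hS

theorem exists_of_boundary_one_eq_zero {α β : QuaternionGroupRing k n}
    (h₁ : α * S + β * (θ * τ + 1) = 0) (h₂ : α * -(τ + 1) + β * (θ - 1) = 0) :
    ∃ γ, γ * (θ - 1) = α ∧ γ * (1 - θ * τ) = β := by
  have hS := halfRotationSum_mul_theta_sub_one k n
  have hττN := tau_mul_tau_mul_rotationSum k n
  have hNτ := rotationSum_mul_tau k n
  have hNθ := rotationSum_mul_theta_sub_one k n
  have hθτ := theta_mul_tau_mul_theta k n
  obtain ⟨w, p, q, rfl⟩ := exists_eq_mul_theta_sub_one_add α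
  obtain rfl : q = -p := by
    have hpq : (C (p + q) + C (p + q) * τ) * N = 0 := by
      simp only [map_add]
      linear_combination (norm := noncomm_ring)
        -h₂ * N + (β - w) * theta_sub_one_mul_rotationSum k n
        - w * theta_mul_tau_mul_rotationSum k n - C q * hττN
    linear_combination (eq_zero_of_algebraMap_add_mul_rotationSum_eq_zero hpq).1
  rw [map_neg] at h₁ h₂ ⊢
  have hβ : (β - w * (1 - θ * τ) + C p * S) * (θ - 1) = 0 := by
    linear_combination (norm := noncomm_ring) h₂ + C p * hS + w * hθτ
  obtain ⟨r, s, hrs⟩ := exists_eq_algebraMap_add_mul_rotationSum hβ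
  have hprs : (C (r + s) + C (r + s - p) * τ) * N = 0 := by
    simp only [map_sub, map_add]
    linear_combination (norm := noncomm_ring) h₁ - hrs * (θ * τ + 1)
      - w * theta_sub_one_mul_halfRotationSum k n + w * hθτ * τ
      + C p * tau_mul_halfRotationSum_add k n
      - (C r + C s * τ) * (hNθ * τ + hNτ) - C s * hττN
  obtain ⟨hrs₀, hprs₀⟩ := eq_zero_of_algebraMap_add_mul_rotationSum_eq_zero hprs
  obtain rfl : p = 0 := by linear_combination hrs₀ - hprs₀
  obtain rfl : s = -r := by linear_combination hrs₀
  simp only [map_zero, map_neg] at hrs ⊢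
  refine ⟨w + C r * N, ?_, ?_⟩
  · linear_combination (norm := noncomm_ring) C r * hNθ
  · linear_combination (norm := noncomm_ring) -hrs - C r * hNθ * τ - C r * hNτ

theorem exists_of_boundary_two_eq_zero {γ : QuaternionGroupRing k n} (h₁ : γ * (θ - 1) = 0)
    (h₂ : γ * (1 - θ * τ) = 0) : ∃ c, c * ((1 + τ) * N) = γ := by
  obtain ⟨r, s, rfl⟩ := exists_eq_algebraMap_add_mul_rotationSum h₁
  obtain rfl : r = s := by
    have hrs : (C (r - s) + C (s - r) * τ) * N = 0 := by
      simp only [map_sub]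
      linear_combination (norm := noncomm_ring) h₂ + h₁ * τ
        + (C r + C s * τ) * rotationSum_mul_tau k n + C s * tau_mul_tau_mul_rotationSum k n
    exact sub_eq_zero.1 (eq_zero_of_algebraMap_add_mul_rotationSum_eq_zero hrs).1
  exact ⟨C r, by noncomm_ring⟩

theorem exists_vecMul_boundary_zero_eq (v : Fin 1 → QuaternionGroupRing k n)
    (hv : augmentation (v 0) = 0) : ∃ u, u ᵥ* boundary k n 0 = v := by
  obtain ⟨x, y, hxy⟩ := exists_of_augmentation_eq_zero hv
  refine ⟨![x, y], ?_⟩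
  change ![x, y] ᵥ* !![θ - 1; τ - 1] = v
  ext i : 1
  fin_cases i
  simpa [Matrix.vecMul_eq_sum] using hxy

theorem exists_vecMul_boundary_one_eq (v : Fin 2 → QuaternionGroupRing k n)
    (hv : v ᵥ* boundary k n 0 = 0) : ∃ u, u ᵥ* boundary k n 1 = v := by
  change v ᵥ* !![θ - 1; τ - 1] = 0 at hv
  obtain ⟨x, y, hx, hy⟩ := exists_of_boundary_zero_eq_zero (α := v 0) (β := v 1)
    (by simpa [Matrix.vecMul_eq_sum] using congrFun hv 0)
  refine ⟨![x, y], ?_⟩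
  change ![x, y] ᵥ* !![S, -(τ + 1); θ * τ + 1, θ - 1] = v
  ext i : 1
  fin_cases i
  · simpa [Matrix.vecMul_eq_sum] using hx
  · simpa [Matrix.vecMul_eq_sum] using hy

theorem exists_vecMul_boundary_two_eq (v : Fin 2 → QuaternionGroupRing k n)
    (hv : v ᵥ* boundary k n 1 = 0) : ∃ u, u ᵥ* boundary k n 2 = v := by
  change v ᵥ* !![S, -(τ + 1); θ * τ + 1, θ - 1] = 0 at hv
  obtain ⟨γ, h₁, h₂⟩ := exists_of_boundary_one_eq_zero (α := v 0) (β := v 1)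
    (by simpa [Matrix.vecMul_eq_sum] using congrFun hv 0)
    (by simpa [Matrix.vecMul_eq_sum] using congrFun hv 1)
  refine ⟨![γ], ?_⟩
  change ![γ] ᵥ* !![θ - 1, 1 - θ * τ] = v
  ext i : 1
  fin_cases i
  · simpa [Matrix.vecMul_eq_sum] using h₁
  · simpa [Matrix.vecMul_eq_sum] using h₂

theorem exists_vecMul_boundary_three_eq (v : Fin 1 → QuaternionGroupRing k n)
    (hv : v ᵥ* boundary k n 2 = 0) : ∃ u, u ᵥ* boundary k n 3 = v := by
  change v ᵥ* !![θ - 1, 1 - θ * τ] = 0 at hv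
  obtain ⟨c, hc⟩ := exists_of_boundary_two_eq_zero (γ := v 0)
    (by simpa [Matrix.vecMul_eq_sum] using congrFun hv 0)
    (by simpa [Matrix.vecMul_eq_sum] using congrFun hv 1)
  refine ⟨![c], ?_⟩
  change ![c] ᵥ* !![(1 + τ) * N] = v
  ext i : 1
  fin_cases i
  simpa [Matrix.vecMul_eq_sum] using hc

theorem augmentation_eq_zero_of_vecMul_boundary_three_eq_zero (v : Fin 1 → QuaternionGroupRing k n)
    (hv : v ᵥ* boundary k n 3 = 0) : augmentation (v 0) = 0 := by
  change v ᵥ* !![(1 + τ) * N] = 0 at hv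
  apply augmentation_eq_zero_of_mul_rotationSum_eq_zero
  simpa [Matrix.vecMul_eq_sum] using congrFun hv 0

theorem exact_boundary : ∀ m, Function.Exact (· ᵥ* boundary k n (m + 1)) (· ᵥ* boundary k n m)
  | 0 => exact_vecMul (boundary_succ_mul_boundary 0) exists_vecMul_boundary_one_eq
  | 1 => exact_vecMul (boundary_succ_mul_boundary 1) exists_vecMul_boundary_two_eq
  | 2 => exact_vecMul (boundary_succ_mul_boundary 2) exists_vecMul_boundary_three_eq
  | 3 => exact_vecMul (boundary_succ_mul_boundary 3) fun v hv ↦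
    exists_vecMul_boundary_zero_eq v (augmentation_eq_zero_of_vecMul_boundary_three_eq_zero v hv)
  | m + 4 => exact_boundary m

section Cohomology

variable (k : Type) [CommRing k] (n : ℕ) [NeZero n]

/-- The 4-periodic free resolution of the trivial representation of the quaternion group. -/
noncomputable def resolution : ProjectiveResolution (Rep.trivial k (QuaternionGroup n) k) :=
  resolutionOfExact (X := fun m ↦ Rep.free k (QuaternionGroup n) (Fin (rank m)))
    (fun m ↦ freeMap (boundary k n m)) (augmentationHom k (QuaternionGroup n) (Fin 1))
    (fun m ↦ exact_freeMap (exact_boundary m))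
    (exact_freeMap_augmentationHom (κ := Fin 1) augmentation_boundary_zero
      exists_vecMul_boundary_zero_eq)
    augmentationHom_surjective

theorem resolution_d_comp_eq_zero [CharP k 2] (hn : Even n) (i : ℕ)
    (f : (resolution k n).complex.X i ⟶ Rep.trivial k (QuaternionGroup n) k) :
    (resolution k n).complex.d (i + 1) i ≫ f = 0 := by
  have hd : (resolution k n).complex.d (i + 1) i = freeMap (boundary k n i) :=
    resolutionOfExact_complex_d (X := fun m ↦ Rep.free k (QuaternionGroup n) (Fin (rank m))) ..
  rw [hd]
  exact freeMap_comp_eq_zero_of_augmentation_eq_zero (augmentation_boundary hn i) f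

/-- In characteristic two, the cohomology of the quaternion group of order `4 * n` with `n` even is
free on the duals of the generators of the periodic resolution. -/
noncomputable def groupCohomologyTrivialEquiv [CharP k 2] (hn : Even n) (s : ℕ) :
    groupCohomology (Rep.trivial k (QuaternionGroup n) k) s ≃ₗ[k] (Fin (rank s) → k) :=
  groupCohomologyEquivHom (resolution k n) (resolution_d_comp_eq_zero k n hn) s ≪≫ₗ
    Rep.freeLiftLEquiv k (QuaternionGroup n) (Fin (rank s)) (Rep.trivial k (QuaternionGroup n) k)

end Cohomology

end QuaternionGroupRing

theorem groupCohomology_quaternion_dimensions_general (k : Type) [CommRing k] [CharP k 2] (n : ℕ)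
    [NeZero n] (hn : Even n) (s : ℕ) :
    Module.finrank k (groupCohomology (Rep.trivial k (QuaternionGroup n) k) s) =
      if s % 4 = 0 ∨ s % 4 = 3 then 1 else 2 := by
  have : Nontrivial k := CharP.nontrivial_of_char_ne_one (v := 2) (by simp)
  rw [(QuaternionGroupRing.groupCohomologyTrivialEquiv k n hn s).finrank_eq, Module.finrank_fin_fun,
    QuaternionGroupRing.rank_eq]

/-- For `k` a field of characteristic `2` and `Q_8` the quaternion group of order 8
(`QuaternionGroup 2`), the dimensions of `H^s(Q_8; k)` are 4-periodic:
`dim H^s = 1` if `s ≡ 0, 3 (mod 4)` and `dim H^s = 2` if `s ≡ 1, 2 (mod 4)`. -/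
theorem groupCohomology_quaternion_dimensions
    (k : Type) [Field k] [CharP k 2] (s : ℕ) :
    Module.finrank k (groupCohomology (Rep.trivial k (QuaternionGroup 2) k) s) =
      if s % 4 = 0 ∨ s % 4 = 3 then 1 else 2 :=
  groupCohomology_quaternion_dimensions_general k 2 even_two s
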